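/- Let f ∈ R := MvPolynomial ℂ (Fin 2) and let x, y ∈ ℂ⟦T⟧ = PowerSeries ℂ, with φ := MvPolynomial.aeval ![x, y] : R → ℂ⟦T⟧. Assume φ f = 0. Then (Dx)³ · φ(i_f) = −(φ(f_y))³ · ((Dx)·(D²y) − (D²x)·(Dy)). Consequently, ord(φ(i_f)) + 3·ord(Dx) = 3·ord(φ(f_y)) + ord((Dx)·(D²y) − (D²x)·(Dy)) as an equality in ℕ∞. -/

import Mathlib

open MvPolynomial

noncomputable section

/-- Partial derivative with respect to the first variable `X`. -/
def dx (f : MvPolynomial (Fin 2) ℂ) : MvPolynomial (Fin 2) ℂ := pderiv 0 f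

/-- Partial derivative with respect to the second variable `Y`. -/
def dy (f : MvPolynomial (Fin 2) ℂ) : MvPolynomial (Fin 2) ℂ := pderiv 1 f

/-- The inflection polynomial `i_f = f_y²·f_xx − 2·f_x·f_y·f_xy + f_x²·f_yy`. -/
def infl (f : MvPolynomial (Fin 2) ℂ) : MvPolynomial (Fin 2) ℂ :=
  (dy f) ^ 2 * dx (dx f) - 2 * dx f * dy f * dy (dx f) + (dx f) ^ 2 * dy (dy f)

/-- The vertex polynomial
`v_f = (f_x² + f_y²)(f_x³ f_yyy − 3 f_x² f_y f_xyy + 3 f_x f_y² f_xxy − f_y³ f_xxx)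
      − 3((f_x² − f_y²) f_xy − f_x f_y (f_xx − f_yy)) · i_f`. -/
def vert (f : MvPolynomial (Fin 2) ℂ) : MvPolynomial (Fin 2) ℂ :=
  ((dx f) ^ 2 + (dy f) ^ 2) *
      ((dx f) ^ 3 * dy (dy (dy f)) - 3 * (dx f) ^ 2 * dy f * dy (dy (dx f)) +
        3 * dx f * (dy f) ^ 2 * dy (dx (dx f)) - (dy f) ^ 3 * dx (dx (dx f))) -
    3 * (((dx f) ^ 2 - (dy f) ^ 2) * dy (dx f) - dx f * dy f * (dx (dx f) - dy (dy f))) *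
      infl f

/-- The canonical map from polynomials to formal power series in two variables. -/
def ι : MvPolynomial (Fin 2) ℂ →+* MvPowerSeries (Fin 2) ℂ :=
  MvPolynomial.coeToMvPowerSeries.ringHom

/-- The local intersection number at the origin of the curves `g = 0` and `h = 0`:
the `ℂ`-dimension of `ℂ⟦x,y⟧/⟨g,h⟩`. -/
def interMult (g h : MvPolynomial (Fin 2) ℂ) : ℕ :=
  Module.finrank ℂ (MvPowerSeries (Fin 2) ℂ ⧸ Ideal.span {ι g, ι h})

end
/-- The formal derivative on `ℂ⟦T⟧`. -/
noncomputable def D : PowerSeries ℂ → PowerSeries ℂ := fun f => PowerSeries.derivative ℂ f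

/-!
Write `φ` for evaluation along `γ = (x, y)`. Differentiating `φ f = const` once shows that the
velocity `(x', y')` is tangent to the curve, that is, parallel to `(-f_y, f_x)`: explicitly
`x' • (-f_y, f_x) = -f_y • (x', y')`. As `i_f` is the Hessian form of `f` on `(-f_y, f_x)`, this
gives `x'² φ(i_f) = φ(f_y)² H(x', y')`. Differentiating twice gives
`H(x', y') = -(φ(f_x) x'' + φ(f_y) y'')`, and after one more factor `x'` tangency eliminates
`φ(f_x)`.
-/

open Matrix

theorem smul_dotProduct_mulVec_smul {A σ : Type*} [CommSemiring A] [Fintype σ]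
    (c : A) (v : σ → A) (H : Matrix σ σ A) :
    (c • v) ⬝ᵥ H *ᵥ (c • v) = c ^ 2 * (v ⬝ᵥ H *ᵥ v) := by
  rw [mulVec_smul, smul_dotProduct, dotProduct_smul, smul_eq_mul, smul_eq_mul, sq, mul_assoc]

section ChainRule

variable {R A M σ : Type*} [CommSemiring R]

theorem pderiv_pderiv_comm (i j : σ) (f : MvPolynomial σ R) :
    pderiv i (pderiv j f) = pderiv j (pderiv i f) := by
  obtain rfl | hij := eq_or_ne i j
  · rfl
  · ext m
    simp only [coeff_pderiv, Finsupp.add_apply, Finsupp.single_eq_of_ne hij,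
      Finsupp.single_eq_of_ne hij.symm, add_zero, add_right_comm m, mul_right_comm]

variable [Fintype σ] [CommSemiring A] [Algebra R A]

theorem derivation_aeval_eq_sum [AddCommMonoid M] [Module A M] [Module R M]
    (δ : Derivation R A M) (γ : σ → A) (f : MvPolynomial σ R) :
    δ (aeval γ f) = ∑ i, aeval γ (pderiv i f) • δ (γ i) := by
  classical
  induction f using MvPolynomial.induction_on with
  | C a => simp
  | add p q hp hq => simp only [map_add, hp, hq, add_smul, Finset.sum_add_distrib]
  | mul_X p j hp =>
    simp only [map_mul, aeval_X, Derivation.leibniz, hp, pderiv_X, smul_eq_mul, map_add, add_smul,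
      Finset.sum_add_distrib, Finset.smul_sum, mul_smul]
    simp [Pi.single_apply]

/-- The Hessian matrix of `f`, whose quadratic form, evaluated along `γ`, is the second-order
part of `(f ∘ γ)''`. It is symmetric by `pderiv_pderiv_comm`, so the index order is immaterial. -/
noncomputable def hessian (f : MvPolynomial σ R) : Matrix σ σ (MvPolynomial σ R) :=
  .of fun i j => pderiv j (pderiv i f)

theorem derivation_derivation_aeval_eq_hessian_add_sum (δ : Derivation R A A) (γ : σ → A)
    (f : MvPolynomial σ R) :
    δ (δ (aeval γ f)) =
      (δ ∘ γ) ⬝ᵥ (hessian f).map (aeval γ) *ᵥ (δ ∘ γ) +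
        ∑ i, aeval γ (pderiv i f) * δ (δ (γ i)) := by
  simp only [derivation_aeval_eq_sum, map_sum, smul_eq_mul, Derivation.leibniz, dotProduct, mulVec,
    hessian, Matrix.map_apply, of_apply, Function.comp_apply, Finset.sum_add_distrib]
  exact add_comm _ _

end ChainRule

section PlaneCurve

variable {R A : Type*} [CommRing R] [CommRing A] [Algebra R A]

/-- The inflection polynomial `i_f` over an arbitrary coefficient ring; over `ℂ` it is `infl`. -/
noncomputable def inflectionPolynomial (f : MvPolynomial (Fin 2) R) : MvPolynomial (Fin 2) R :=
  (pderiv 1 f) ^ 2 * pderiv 0 (pderiv 0 f)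
    - 2 * pderiv 0 f * pderiv 1 f * pderiv 1 (pderiv 0 f)
    + (pderiv 0 f) ^ 2 * pderiv 1 (pderiv 1 f)

/-- The inflection function `i_γ = x'y'' − x''y'` of a plane curve `γ = (x, y)`, where the prime is
an arbitrary derivation `δ` of the coordinate ring. -/
def curveInflection (δ : Derivation R A A) (γ : Fin 2 → A) : A :=
  δ (γ 0) * δ (δ (γ 1)) - δ (δ (γ 0)) * δ (γ 1)

/-- The vector `(-f_y, f_x)` along `γ`, tangent to the level curve of `f`: the gradient rotated by
a right angle. -/
noncomputable def levelTangent (f : MvPolynomial (Fin 2) R) (γ : Fin 2 → A) : Fin 2 → A :=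
  ![-aeval γ (pderiv 1 f), aeval γ (pderiv 0 f)]

theorem aeval_inflectionPolynomial_eq_hessian (f : MvPolynomial (Fin 2) R) (γ : Fin 2 → A) :
    aeval γ (inflectionPolynomial f) =
      levelTangent f γ ⬝ᵥ (hessian f).map (aeval γ) *ᵥ levelTangent f γ := by
  simp only [inflectionPolynomial, levelTangent, hessian, dotProduct, mulVec, Fin.sum_univ_two,
    Matrix.map_apply, of_apply, cons_val_zero, cons_val_one, map_add, map_sub,
    map_mul, map_pow, map_ofNat]
  rw [pderiv_pderiv_comm 0 1 f]
  ring

variable {δ : Derivation R A A} {f : MvPolynomial (Fin 2) R} {γ : Fin 2 → A}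

theorem gradient_dot_velocity_eq_zero (hf : δ (aeval γ f) = 0) :
    aeval γ (pderiv 0 f) * δ (γ 0) + aeval γ (pderiv 1 f) * δ (γ 1) = 0 := by
  simpa only [derivation_aeval_eq_sum, Fin.sum_univ_two, smul_eq_mul] using hf

theorem velocity_smul_levelTangent (hf : δ (aeval γ f) = 0) :
    δ (γ 0) • levelTangent f γ = -aeval γ (pderiv 1 f) • (δ ∘ γ) := by
  ext i
  fin_cases i
  · simp [levelTangent, mul_comm]
  · simp only [levelTangent, Fin.mk_one, Pi.smul_apply, cons_val_one, cons_val_fin_one, smul_eq_mul,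
      Function.comp_apply]
    linear_combination gradient_dot_velocity_eq_zero hf

theorem velocity_sq_mul_aeval_inflectionPolynomial (hf : δ (aeval γ f) = 0) :
    δ (γ 0) ^ 2 * aeval γ (inflectionPolynomial f) =
      aeval γ (pderiv 1 f) ^ 2 * ((δ ∘ γ) ⬝ᵥ (hessian f).map (aeval γ) *ᵥ (δ ∘ γ)) := by
  rw [aeval_inflectionPolynomial_eq_hessian, ← smul_dotProduct_mulVec_smul,
    velocity_smul_levelTangent hf, smul_dotProduct_mulVec_smul, neg_sq]

theorem velocity_mul_hessian_velocity (hf : δ (aeval γ f) = 0) :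
    δ (γ 0) * ((δ ∘ γ) ⬝ᵥ (hessian f).map (aeval γ) *ᵥ (δ ∘ γ)) =
      -aeval γ (pderiv 1 f) * curveInflection δ γ := by
  have tangency := gradient_dot_velocity_eq_zero hf
  have second_derivative := derivation_derivation_aeval_eq_hessian_add_sum δ γ f
  rw [hf, map_zero, Fin.sum_univ_two] at second_derivative
  rw [curveInflection]
  linear_combination -δ (γ 0) * second_derivative - δ (δ (γ 0)) * tangency

theorem velocity_cube_mul_aeval_inflectionPolynomial (hf : δ (aeval γ f) = 0) :
    δ (γ 0) ^ 3 * aeval γ (inflectionPolynomial f) =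
      -aeval γ (pderiv 1 f) ^ 3 * curveInflection δ γ := by
  rw [pow_succ', mul_assoc, velocity_sq_mul_aeval_inflectionPolynomial hf, mul_left_comm,
    velocity_mul_hessian_velocity hf]
  ring

end PlaneCurve

theorem inflection_pullback_identity_general {R : Type*} [CommRing R] [IsDomain R]
    (f : MvPolynomial (Fin 2) R) (γ : Fin 2 → PowerSeries R)
    (hf : PowerSeries.derivative R (aeval γ f) = 0) :
    PowerSeries.derivative R (γ 0) ^ 3 * aeval γ (inflectionPolynomial f)
        = -aeval γ (pderiv 1 f) ^ 3 * curveInflection (PowerSeries.derivative R) γ ∧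
    (aeval γ (inflectionPolynomial f)).order + 3 * (PowerSeries.derivative R (γ 0)).order
        = 3 * (aeval γ (pderiv 1 f)).order
          + (curveInflection (PowerSeries.derivative R) γ).order := by
  have identity := velocity_cube_mul_aeval_inflectionPolynomial hf
  refine ⟨identity, ?_⟩
  have order_identity := congrArg PowerSeries.order identity
  simp only [neg_mul, PowerSeries.order_neg, PowerSeries.order_mul, PowerSeries.order_pow,
    nsmul_eq_mul, Nat.cast_ofNat] at order_identity
  rw [add_comm, order_identity]

/-- **Key identity in Theorem 3.8(1).** If `γ = (x, y)` parametrises a branch of the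
curve `f = 0` (i.e. `f(x(t), y(t)) = 0`), then `x'³ · (i_f ∘ γ) = −(f_y ∘ γ)³ · i_γ`
where `i_γ = x'y'' − x''y'`; consequently
`ord(i_f ∘ γ) + 3·ord(x') = 3·ord(f_y ∘ γ) + ord(i_γ)`. -/
theorem inflection_pullback_identity
    (f : MvPolynomial (Fin 2) ℂ) (x y : PowerSeries ℂ)
    (hf : MvPolynomial.aeval ![x, y] f = 0) :
    (D x) ^ 3 * MvPolynomial.aeval ![x, y] (infl f)
        = -(MvPolynomial.aeval ![x, y] (dy f)) ^ 3 * (D x * D (D y) - D (D x) * D y) ∧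
    (MvPolynomial.aeval ![x, y] (infl f)).order + 3 * (D x).order
        = 3 * (MvPolynomial.aeval ![x, y] (dy f)).order
          + (D x * D (D y) - D (D x) * D y).order :=
  inflection_pullback_identity_general f ![x, y] (by rw [hf, map_zero])
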